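/- For every maximal cap S in AG(4,3), the number of maximal caps in AG(4,3) that are disjoint from S is exactly 198. -/

import Mathlib

/-- A cap in `AG(n,3)`: a finite set of points of `Fin n → ZMod 3` containing no
three distinct collinear points (three distinct points are collinear iff they sum to zero). -/
def IsCap {n : ℕ} (C : Finset (Fin n → ZMod 3)) : Prop :=
  ∀ x ∈ C, ∀ y ∈ C, ∀ z ∈ C, x ≠ y → x ≠ z → y ≠ z → x + y + z ≠ 0

/-- A maximal cap: a cap of largest possible size. -/
def MaximalCap {n : ℕ} (C : Finset (Fin n → ZMod 3)) : Prop :=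
  IsCap C ∧ ∀ D : Finset (Fin n → ZMod 3), IsCap D → D.card ≤ C.card

/-!
Counting pairs and triples of points of a cap in all parallel classes of hyperplanes produces a
class whose three members meet an extremal cap in a prescribed way: `0, 2, 2` points in dimension
two, `1, 4, 4` in dimension three and `2, 9, 9` in dimension four. Two of these sections determine
the third up to an affine map, so the maximal cap of each dimension is unique up to affine
equivalence. In dimension four it is the set of nonzero isotropic vectors of the form `x₀x₁ + x₂² +
x₃²`; hence the maximal caps are the translates of the sets of nonzero isotropic vectors of the
symmetric matrices of determinant -1. A maximal cap disjoint from the standard one has the same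
apex: isometries of the form reduce a nonzero translation vector to `(1, s, 0, 0)`, and no maximal
cap with such an apex avoids the standard one. A symmetric matrix is determined up to a scalar by
its isotropic vectors, so it remains to count the matrices with leading entry 1 whose form has no
zero on the standard cap, and there are 198.
-/

open Finset Matrix

/-! ### Affine equivalence and hyperplane sections -/

/-- The point set of the affine space `AG(n,3)`. -/
abbrev AG (n : ℕ) := Fin n → ZMod 3

section Basic

variable {n : ℕ} {C D E : Finset (AG n)}

lemma add_self_eq_neg (x : AG n) : x + x = -x := by
  have h : ∀ t : ZMod 3, t + t = -t := by decide
  exact funext fun i => h (x i)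

lemma neg_sub_eq_left_iff {x y : AG n} : -x - y = x ↔ x = y := by
  rw [← add_self_eq_neg, add_sub_assoc, add_eq_left, sub_eq_zero]

lemma isCap_iff : IsCap C ↔ ∀ x ∈ C, ∀ y ∈ C, x ≠ y → -x - y ∉ C := by
  constructor
  · intro h x hx y hy hxy hz
    refine h x hx y hy _ hz hxy (fun h => hxy (neg_sub_eq_left_iff.1 h.symm)) (fun h => hxy ?_)
      (by abel)
    rw [← neg_add', add_comm, neg_add'] at h
    exact (neg_sub_eq_left_iff.1 h.symm).symm
  · intro h x hx y hy z hz hxy _ _ hsum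
    exact h x hx y hy hxy (by rwa [← neg_add', neg_eq_of_add_eq_zero_right hsum])

instance (C : Finset (AG n)) : Decidable (IsCap C) := decidable_of_iff _ isCap_iff.symm

lemma IsCap.mono (hD : IsCap D) (h : C ⊆ D) : IsCap C :=
  fun x hx y hy z hz => hD x (h hx) y (h hy) z (h hz)

/-- Affine equivalence of point sets of `AG(n,3)`. -/
def AffEquiv (C D : Finset (AG n)) : Prop :=
  ∃ e : AG n ≃ᵃ[ZMod 3] AG n, ∀ x, e x ∈ D ↔ x ∈ C

lemma AffEquiv.symm : AffEquiv C D → AffEquiv D C := fun ⟨e, he⟩ =>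
  ⟨e.symm, fun x => by rw [← he, e.apply_symm_apply]⟩

lemma AffEquiv.trans : AffEquiv C D → AffEquiv D E → AffEquiv C E := fun ⟨e, he⟩ ⟨e', he'⟩ =>
  ⟨e.trans e', fun x => by rw [AffineEquiv.trans_apply, he', he]⟩

lemma AffEquiv.card_eq : AffEquiv C D → #C = #D := fun ⟨e, he⟩ =>
  card_equiv e.toEquiv fun x => (he x).symm

lemma affineEquiv_neg_sub (e : AG n ≃ᵃ[ZMod 3] AG n) (x y : AG n) : e (-x - y) = -e x - e y := by
  have h (x y : AG n) : AffineMap.lineMap x y (2 : ZMod 3) = -x - y := by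
    rw [AffineMap.lineMap_apply_module', two_smul, add_self_eq_neg, neg_sub, sub_add_eq_add_sub,
      add_self_eq_neg]
  rw [← h, e.apply_lineMap, h]

lemma AffEquiv.isCap (h : AffEquiv C D) (hC : IsCap C) : IsCap D := by
  obtain ⟨e, he⟩ := h.symm
  rw [isCap_iff] at hC ⊢
  intro x hx y hy hxy hz
  refine hC _ ((he x).2 hx) _ ((he y).2 hy) (e.injective.ne hxy) ?_
  rwa [← affineEquiv_neg_sub, he]

lemma AffEquiv.isCap_iff (h : AffEquiv C D) : IsCap C ↔ IsCap D := ⟨h.isCap, h.symm.isCap⟩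

lemma AffEquiv.maximalCap_iff (h : AffEquiv C D) : MaximalCap C ↔ MaximalCap D := by
  simp only [MaximalCap, h.isCap_iff, h.card_eq]

lemma affEquiv_filter (e : AG n ≃ᵃ[ZMod 3] AG n) (C : Finset (AG n)) :
    AffEquiv C {x | e x ∈ C} :=
  AffEquiv.symm ⟨e, fun x => by simp⟩

/-- In a larger cap some `k` points would form a copy of `S`, which admits no further point. -/
lemma IsCap.card_le_of_forall_affEquiv {k : ℕ} {S : Finset (AG n)}
    (hS : ∀ x ∉ S, ¬IsCap (insert x S))
    (h : ∀ D : Finset (AG n), IsCap D → #D = k → AffEquiv S D) (hC : IsCap C) : #C ≤ k := by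
  by_contra! hlt
  obtain ⟨D, hDC, hD⟩ := exists_subset_card_eq hlt.le
  obtain ⟨e, he⟩ := h D (hC.mono hDC) hD
  obtain ⟨y, hyC, hyD⟩ := exists_mem_notMem_of_card_lt_card (hD ▸ hlt : #D < #C)
  have hx : e.symm y ∉ S := by rwa [← he, e.apply_symm_apply]
  refine hS _ hx (IsCap.mono ((affEquiv_filter e C).isCap hC) (insert_subset ?_ fun x hxS => ?_))
  · simpa using hyC
  · simpa using hDC ((he x).2 hxS)

end Basic

section Layer

variable {n : ℕ}

/-- The section of `C` by the hyperplane `x₀ = t`, as a subset of `AG(n,3)`. -/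
def layer (C : Finset (AG (n + 1))) (t : ZMod 3) : Finset (AG n) := {x | vecCons t x ∈ C}

@[simp]
lemma mem_layer {C : Finset (AG (n + 1))} {t : ZMod 3} {x : AG n} :
    x ∈ layer C t ↔ vecCons t x ∈ C := by
  simp [layer]

lemma card_layer (C : Finset (AG (n + 1))) (t : ZMod 3) : #(layer C t) = #{x ∈ C | x 0 = t} :=
  card_bij' (fun x _ => vecCons t x) (fun x _ => vecTail x) (by simp)
    (by
      simp only [mem_filter, mem_layer]
      rintro x ⟨hx, rfl⟩
      change vecCons (vecHead x) (vecTail x) ∈ C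
      rwa [cons_head_tail])
    (by simp)
    (by
      simp only [mem_filter]
      rintro x ⟨-, rfl⟩
      exact cons_head_tail x)

lemma IsCap.isCap_layer {C : Finset (AG (n + 1))} (hC : IsCap C) (t : ZMod 3) :
    IsCap (layer C t) := by
  rw [isCap_iff] at hC ⊢
  simp only [mem_layer]
  intro x hx y hy hxy hz
  refine hC _ hx _ hy (fun h => hxy (vecCons_inj.1 h).2) ?_
  have ht : ∀ t : ZMod 3, -t - t = t := by decide
  simpa [ht] using hz

lemma IsCap.neg_sub_notMem_layer {C : Finset (AG (n + 1))} (hC : IsCap C) {s t : ZMod 3}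
    (hst : s ≠ t) {x y : AG n} (hx : x ∈ layer C s) (hy : y ∈ layer C t) :
    -x - y ∉ layer C (-s - t) := by
  rw [mem_layer] at hx hy ⊢
  have h := isCap_iff.1 hC _ hx _ hy fun h => hst (vecCons_inj.1 h).1
  simpa using h

lemma ext_layer {C D : Finset (AG (n + 1))} (h : ∀ t, layer C t = layer D t) : C = D := by
  ext x
  rw [← cons_head_tail x, ← mem_layer, h, mem_layer]

lemma ext_layer_of_three {C D : Finset (AG (n + 1))} (h₀ : layer C 0 = layer D 0)
    (h₁ : layer C 1 = layer D 1) (h₂ : layer C 2 = layer D 2) : C = D := ext_layer fun t => by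
  have ht : ∀ t : ZMod 3, t = 0 ∨ t = 1 ∨ t = 2 := by decide
  obtain rfl | rfl | rfl := ht t
  exacts [h₀, h₁, h₂]

/-- `E` acts on the layer `s = 1` through `e` alone; `w` shears the other layers against it. -/
lemma exists_affineEquiv_vecCons (e : AG n ≃ᵃ[ZMod 3] AG n) (w : AG n) :
    ∃ E : AG (n + 1) ≃ᵃ[ZMod 3] AG (n + 1),
      ∀ s x, E (vecCons s x) = vecCons s (e x + (s - 1) • w) := by
  let c := Fin.consLinearEquiv (ZMod 3) fun _ : Fin (n + 1) => ZMod 3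
  let L := c.symm ≪≫ₗ (LinearEquiv.refl (ZMod 3) (ZMod 3)).skewProd e.linear
    (LinearMap.toSpanSingleton (ZMod 3) _ w) ≪≫ₗ c
  refine ⟨L.toAffineEquiv.trans (AffineEquiv.constVAdd (ZMod 3) _ (vecCons 0 (e 0 - w))),
    fun s x => ?_⟩
  have hL : L (vecCons s x) = vecCons s (e.linear x + s • w) := rfl
  have he : e x = e.linear x + e 0 := by
    simpa using e.map_vadd 0 x
  simp only [AffineEquiv.trans_apply, LinearEquiv.coe_toAffineEquiv, hL,
    AffineEquiv.constVAdd_apply, vadd_eq_add, cons_add_cons, zero_add, he]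
  congr 1
  module

lemma exists_affEquiv_layer (C : Finset (AG (n + 1))) (e : AG n ≃ᵃ[ZMod 3] AG n) (w : AG n) :
    ∃ D, AffEquiv C D ∧ (∀ s, #(layer D s) = #(layer C s)) ∧
      ∀ s x, x ∈ layer D s ↔ e x + (s - 1) • w ∈ layer C s := by
  obtain ⟨E, hE⟩ := exists_affineEquiv_vecCons e w
  have hmem : ∀ s x, x ∈ layer ({x | E x ∈ C} : Finset (AG (n + 1))) s ↔
      e x + (s - 1) • w ∈ layer C s := fun s x => by simp [hE]
  refine ⟨_, affEquiv_filter E C, fun s => ?_, hmem⟩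
  exact card_equiv (e.toEquiv.trans (Equiv.addRight ((s - 1) • w))) (hmem s)

lemma exists_linearEquiv_apply_zero {f : AG (n + 1)} (hf : f ≠ 0) :
    ∃ L : AG (n + 1) ≃ₗ[ZMod 3] AG (n + 1), ∀ x, L x 0 = f ⬝ᵥ x := by
  obtain ⟨i, hi⟩ := Function.ne_iff.1 hf
  let M : Matrix (Fin (n + 1)) (Fin (n + 1)) (ZMod 3) :=
    of (vecCons f fun j => Pi.single (i.succAbove j) 1)
  refine ⟨LinearEquiv.ofInjectiveEndo M.mulVecLin ?_, fun x => rfl⟩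
  rw [← LinearMap.ker_eq_bot, LinearMap.ker_eq_bot']
  intro x hx
  have hsucc (j) : x (i.succAbove j) = 0 := by
    simpa [M, mulVec] using congrFun hx j.succ
  have hzero : f ⬝ᵥ x = 0 := congrFun hx 0
  rw [dotProduct, Fin.sum_univ_succAbove _ i] at hzero
  have hxi : x i = 0 := by simpa [hsucc, show f i ≠ 0 from hi] using hzero
  exact funext fun k => by
    obtain rfl | ⟨j, rfl⟩ := i.eq_self_or_eq_succAbove k
    exacts [hxi, hsucc j]

lemma exists_affEquiv_card_layer (C : Finset (AG (n + 1))) {f : AG (n + 1)} (hf : f ≠ 0)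
    (t : ZMod 3) : ∃ D, AffEquiv C D ∧ ∀ s, #(layer D s) = #{x ∈ C | f ⬝ᵥ x = t + s} := by
  obtain ⟨L, hL⟩ := exists_linearEquiv_apply_zero hf
  let e := L.toAffineEquiv.trans (AffineEquiv.constVAdd (ZMod 3) _ (Pi.single 0 (-t)))
  refine ⟨_, affEquiv_filter e.symm C, fun s => ?_⟩
  rw [card_layer]
  refine (card_equiv e.toEquiv fun x => ?_).symm
  have hx : e x 0 = -t + f ⬝ᵥ x := by simp [e, hL]
  simp only [mem_filter, mem_univ, true_and, AffineEquiv.coe_toEquiv, e.symm_apply_apply, hx,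
    neg_add_eq_iff_eq_add]

end Layer

/-! ### Double counting over hyperplanes -/

section DoubleCounting

variable {n : ℕ}

/-- The number of points of `C` on the hyperplane `f ⬝ᵥ x = t`. -/
def levelCard (C : Finset (AG n)) (f : AG n) (t : ZMod 3) : ℕ := #{x ∈ C | f ⬝ᵥ x = t}

lemma sum_choose_levelCard (C : Finset (AG n)) (k : ℕ) :
    ∑ f, ∑ t, (levelCard C f t).choose k =
      ∑ s ∈ powersetCard k C, #{p : AG n × ZMod 3 | ∀ x ∈ s, p.1 ⬝ᵥ x = p.2} := by
  have hfilter (f : AG n) (t : ZMod 3) :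
      powersetCard k {x ∈ C | f ⬝ᵥ x = t} = {s ∈ powersetCard k C | ∀ x ∈ s, f ⬝ᵥ x = t} := by
    ext s
    simp only [mem_powersetCard, mem_filter, subset_iff]
    grind
  simp only [levelCard, ← card_powersetCard, hfilter]
  rw [← Fintype.sum_prod_type']
  exact sum_card_bipartiteAbove_eq_sum_card_bipartiteBelow _

lemma sum_choose_levelCard_zero (C : Finset (AG n)) {k : ℕ} (hk : k ≠ 0) :
    ∑ t, (levelCard C 0 t).choose k = (#C).choose k := by
  rw [sum_eq_single_of_mem 0 (mem_univ _)]
  · simp [levelCard]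
  · intro t _ ht
    simp [levelCard, ht.symm, Nat.choose_eq_zero_of_lt, Nat.pos_of_ne_zero hk]

lemma card_filter_dotProduct_eq_zero {k : ℕ} {v : Fin k → AG n}
    (hv : LinearIndependent (ZMod 3) v) :
    #{f : AG n | ∀ i, f ⬝ᵥ v i = 0} = 3 ^ (n - k) := by
  let φ := (Matrix.of v).mulVecLin
  have hrank : Module.finrank (ZMod 3) (LinearMap.ker φ) = n - k := by
    have h := φ.finrank_range_add_finrank_ker
    rw [Module.finrank_fin_fun, show Module.finrank (ZMod 3) (LinearMap.range φ) = _ from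
      hv.rank_matrix, Fintype.card_fin] at h
    omega
  have hcard := Module.natCard_eq_pow_finrank (K := ZMod 3) (V := LinearMap.ker φ)
  rw [Nat.card_zmod, hrank] at hcard
  rw [← hcard, ← Fintype.card_subtype, ← Nat.card_eq_fintype_card]
  refine Nat.card_congr (Equiv.subtypeEquivRight fun f => ?_)
  simp [φ, funext_iff, mulVec, dotProduct_comm]

lemma card_affineForms_pair {x y : AG n} (hxy : x ≠ y) :
    #{p : AG n × ZMod 3 | ∀ z ∈ ({x, y} : Finset (AG n)), p.1 ⬝ᵥ z = p.2} = 3 ^ (n - 1) := by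
  have hv : LinearIndependent (ZMod 3) ![x - y] := by simpa [sub_eq_zero] using hxy
  rw [← card_filter_dotProduct_eq_zero hv]
  refine card_nbij' Prod.fst (fun f => (f, f ⬝ᵥ x)) ?_ ?_ ?_ ?_ <;>
    simp +contextual [Set.MapsTo, Set.LeftInvOn, sub_eq_zero]

lemma linearIndependent_sub_of_isCap {x y z : AG n} (hC : IsCap ({x, y, z} : Finset (AG n)))
    (hxy : x ≠ y) (hxz : x ≠ z) (hyz : y ≠ z) :
    LinearIndependent (ZMod 3) ![x - y, x - z] := by
  have hsum : x + y + z ≠ 0 := hC x (by simp) y (by simp) z (by simp) hxy hxz hyz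
  have hcases : ∀ a : ZMod 3, a = 0 ∨ a = 1 ∨ a = -1 := by decide
  rw [LinearIndependent.pair_iff' (sub_ne_zero.2 hxy)]
  intro a h
  obtain rfl | rfl | rfl := hcases a
  · exact hxz (by simpa [eq_comm, sub_eq_zero] using h)
  · exact hyz (by simpa using h)
  · rw [neg_one_smul, neg_sub, sub_eq_sub_iff_add_eq_add, add_self_eq_neg] at h
    exact hsum (by rw [add_right_comm, add_assoc, add_comm x, add_comm z, h, neg_add_cancel])

lemma card_affineForms_triple {x y z : AG n} (hC : IsCap ({x, y, z} : Finset (AG n)))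
    (hxy : x ≠ y) (hxz : x ≠ z) (hyz : y ≠ z) :
    #{p : AG n × ZMod 3 | ∀ w ∈ ({x, y, z} : Finset (AG n)), p.1 ⬝ᵥ w = p.2} = 3 ^ (n - 2) := by
  rw [← card_filter_dotProduct_eq_zero (linearIndependent_sub_of_isCap hC hxy hxz hyz)]
  refine card_nbij' Prod.fst (fun f => (f, f ⬝ᵥ x)) ?_ ?_ ?_ ?_ <;>
    simp +contextual [Set.MapsTo, Set.LeftInvOn, sub_eq_zero]

lemma sum_choose_two_levelCard (C : Finset (AG n)) :
    ∑ f with f ≠ 0, ∑ t, (levelCard C f t).choose 2 + (#C).choose 2 =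
      (#C).choose 2 * 3 ^ (n - 1) := by
  nth_rw 1 [← sum_choose_levelCard_zero C two_ne_zero]
  rw [filter_ne', sum_erase_add _ _ (mem_univ _), sum_choose_levelCard, ← card_powersetCard,
    ← smul_eq_mul]
  refine sum_eq_card_nsmul fun s hs => ?_
  obtain ⟨x, y, hxy, rfl⟩ := card_eq_two.1 (mem_powersetCard.1 hs).2
  exact card_affineForms_pair hxy

lemma IsCap.sum_choose_three_levelCard {C : Finset (AG n)} (hC : IsCap C) :
    ∑ f with f ≠ 0, ∑ t, (levelCard C f t).choose 3 + (#C).choose 3 =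
      (#C).choose 3 * 3 ^ (n - 2) := by
  nth_rw 1 [← sum_choose_levelCard_zero C three_ne_zero]
  rw [filter_ne', sum_erase_add _ _ (mem_univ _), sum_choose_levelCard, ← card_powersetCard,
    ← smul_eq_mul]
  refine sum_eq_card_nsmul fun s hs => ?_
  obtain ⟨x, y, z, hxy, hxz, hyz, rfl⟩ := card_eq_three.1 (mem_powersetCard.1 hs).2
  exact card_affineForms_triple (hC.mono (mem_powersetCard.1 hs).1) hxy hxz hyz

end DoubleCounting

section Levels

variable {n : ℕ}

lemma sum_zmod_three (F : ZMod 3 → ℕ) : ∑ t, F t = F 0 + F 1 + F 2 := Fin.sum_univ_three F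

lemma sum_levelCard (C : Finset (AG n)) (f : AG n) :
    levelCard C f 0 + levelCard C f 1 + levelCard C f 2 = #C := by
  rw [card_eq_sum_card_fiberwise (f := fun x => f ⬝ᵥ x) (t := univ) (by simp)]
  exact (sum_zmod_three _).symm

lemma IsCap.levelCard_le {C : Finset (AG (n + 1))} (hC : IsCap C) {b : ℕ}
    (hb : ∀ D : Finset (AG n), IsCap D → #D ≤ b) {f : AG (n + 1)} (hf : f ≠ 0) (t : ZMod 3) :
    levelCard C f t ≤ b := by
  obtain ⟨D, hCD, hD⟩ := exists_affEquiv_card_layer C hf t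
  rw [levelCard, ← add_zero t, ← hD]
  exact hb _ ((hCD.isCap hC).isCap_layer 0)

lemma card_filter_ne_zero : #{f : AG n | f ≠ 0} = 3 ^ n - 1 := by
  rw [filter_ne', card_erase_of_mem (mem_univ _), card_univ, Fintype.card_pi, prod_const,
    ZMod.card, card_univ, Fintype.card_fin]

lemma exists_affEquiv_card_layer_of_levelCard {C : Finset (AG (n + 1))} {f : AG (n + 1)}
    (hf : f ≠ 0) {p q : ℕ}
    (h : levelCard C f 0 = p ∧ levelCard C f 1 = q ∧ levelCard C f 2 = q ∨
      levelCard C f 0 = q ∧ levelCard C f 1 = p ∧ levelCard C f 2 = q ∨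
      levelCard C f 0 = q ∧ levelCard C f 1 = q ∧ levelCard C f 2 = p) :
    ∃ D, AffEquiv C D ∧ #(layer D 0) = p ∧ #(layer D 1) = q ∧ #(layer D 2) = q := by
  obtain ⟨t, h₀, h₁, h₂⟩ : ∃ t, levelCard C f (t + 0) = p ∧ levelCard C f (t + 1) = q ∧
      levelCard C f (t + 2) = q := by
    obtain ⟨h₀, h₁, h₂⟩ | ⟨h₀, h₁, h₂⟩ | ⟨h₀, h₁, h₂⟩ := h
    exacts [⟨0, h₀, h₁, h₂⟩, ⟨1, h₁, h₂, h₀⟩, ⟨2, h₂, h₀, h₁⟩]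
  obtain ⟨D, hCD, hD⟩ := exists_affEquiv_card_layer C hf t
  exact ⟨D, hCD, (hD 0).trans h₀, (hD 1).trans h₁, (hD 2).trans h₂⟩

end Levels

/-! ### Uniqueness of the maximal caps in dimensions two, three and four -/

section Plane

lemma IsCap.card_le_two {C : Finset (AG 1)} (hC : IsCap C) : #C ≤ 2 := by
  revert C
  decide

set_option synthInstance.maxSize 2000 in
lemma exists_affEquiv_card_layer_two {C : Finset (AG 2)} (hC : IsCap C) (h4 : #C = 4) :
    ∃ D, AffEquiv C D ∧ #(layer D 0) = 0 ∧ #(layer D 1) = 2 ∧ #(layer D 2) = 2 := by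
  obtain ⟨f, hf, hlt⟩ : ∃ f ∈ ({f | f ≠ 0} : Finset (AG 2)),
      1 < ∑ t, (levelCard C f t).choose 2 := by
    refine exists_lt_of_sum_lt ?_
    have h := sum_choose_two_levelCard C
    norm_num [h4, Nat.choose] at h
    rw [sum_const, card_filter_ne_zero]
    norm_num
    omega
  replace hf : f ≠ 0 := by simpa using hf
  have hsum := sum_levelCard C f
  refine exists_affEquiv_card_layer_of_levelCard hf ?_
  have htypes : ∀ a ≤ 2, ∀ b ≤ 2, ∀ c ≤ 2, a + b + c = 4 →
      1 < a.choose 2 + b.choose 2 + c.choose 2 →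
      a = 0 ∧ b = 2 ∧ c = 2 ∨ a = 2 ∧ b = 0 ∧ c = 2 ∨ a = 2 ∧ b = 2 ∧ c = 0 := by decide
  have hle := hC.levelCard_le (fun D hD => hD.card_le_two) hf
  exact htypes _ (hle 0) _ (hle 1) _ (hle 2) (by omega) (hlt.trans_eq (sum_zmod_three _))

/-- The four points `(±1, ±1)` of `AG(2,3)`, the standard maximal cap of the plane. -/
def planeCap : Finset (AG 2) := {x | x 0 ^ 2 + x 1 ^ 2 = 2}

lemma affEquiv_planeCap {C : Finset (AG 2)} (hC : IsCap C) (h4 : #C = 4) :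
    AffEquiv planeCap C := by
  obtain ⟨D, hCD, h₀, h₁, h₂⟩ := exists_affEquiv_card_layer_two hC h4
  have hcompl : ∀ B : Finset (AG 1), #B = 2 → ∃ r, ∀ x, x ∈ B ↔ x ≠ r := by decide
  obtain ⟨r₁, hr₁⟩ := hcompl _ h₁
  obtain ⟨r₂, hr₂⟩ := hcompl _ h₂
  obtain ⟨D', hDD', -, hD'⟩ :=
    exists_affEquiv_layer D (AffineEquiv.constVAdd (ZMod 3) _ r₁) (r₂ - r₁)
  suffices D' = planeCap from this ▸ (hCD.trans hDD').symm
  have hcap₀ : layer planeCap 0 = ∅ := by decide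
  have hcap₁ : ∀ x : AG 1, x ∈ layer planeCap 1 ↔ x ≠ 0 := by decide
  have hcap₂ : ∀ x : AG 1, x ∈ layer planeCap 2 ↔ x ≠ 0 := by decide
  refine ext_layer_of_three ?_ ?_ ?_ <;> ext x
  · simp [hD', card_eq_zero.1 h₀, hcap₀]
  · simp [hD', hr₁, hcap₁]
  · rw [hD', hr₂, hcap₂, show (2 - 1 : ZMod 3) = 1 from rfl, AffineEquiv.constVAdd_apply,
      vadd_eq_add, one_smul, add_right_comm, add_sub_cancel, ne_eq, add_eq_left]

lemma IsCap.card_le_four {C : Finset (AG 2)} (hC : IsCap C) : #C ≤ 4 :=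
  hC.card_le_of_forall_affEquiv (by decide) fun _ hD h4 => affEquiv_planeCap hD h4

end Plane

section Space

set_option synthInstance.maxSize 2000 in
lemma exists_affEquiv_card_layer_three {C : Finset (AG 3)} (hC : IsCap C) (h9 : #C = 9) :
    ∃ D, AffEquiv C D ∧ #(layer D 0) = 1 ∧ #(layer D 1) = 4 ∧ #(layer D 2) = 4 := by
  obtain ⟨f, hf, hlt⟩ : ∃ f ∈ ({f | f ≠ 0} : Finset (AG 3)),
      11 < ∑ t, (levelCard C f t).choose 2 := by
    refine exists_lt_of_sum_lt ?_
    have h := sum_choose_two_levelCard C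
    norm_num [h9, Nat.choose] at h
    rw [sum_const, card_filter_ne_zero]
    norm_num
    omega
  replace hf : f ≠ 0 := by simpa using hf
  have hsum := sum_levelCard C f
  refine exists_affEquiv_card_layer_of_levelCard hf ?_
  have htypes : ∀ a ≤ 4, ∀ b ≤ 4, ∀ c ≤ 4, a + b + c = 9 →
      11 < a.choose 2 + b.choose 2 + c.choose 2 →
      a = 1 ∧ b = 4 ∧ c = 4 ∨ a = 4 ∧ b = 1 ∧ c = 4 ∨ a = 4 ∧ b = 4 ∧ c = 1 := by decide
  have hle := hC.levelCard_le (fun D hD => hD.card_le_four) hf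
  exact htypes _ (hle 0) _ (hle 1) _ (hle 2) (by omega) (hlt.trans_eq (sum_zmod_three _))

/-- The paraboloid `x₀ = -(x₁² + x₂²)`, the standard maximal cap of `AG(3,3)`. -/
def spaceCap : Finset (AG 3) := {x | x 0 + x 1 ^ 2 + x 2 ^ 2 = 0}

lemma eq_layer_spaceCap_two {B : Finset (AG 2)} (hB : IsCap B) (h4 : #B = 4)
    (hdisj : ∀ x ∈ planeCap, -x ∉ B) : B = layer spaceCap 2 := by
  have hmem : B ∈ powersetCard 4 ({x | -x ∉ planeCap} : Finset (AG 2)) := by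
    refine mem_powersetCard.2 ⟨fun x hx => ?_, h4⟩
    simpa using fun hx' => hdisj _ hx' (by rwa [neg_neg])
  have h : ∀ B ∈ powersetCard 4 ({x | -x ∉ planeCap} : Finset (AG 2)), IsCap B →
      B = layer spaceCap 2 := by decide +kernel
  exact h B hmem hB

lemma affEquiv_spaceCap {C : Finset (AG 3)} (hC : IsCap C) (h9 : #C = 9) :
    AffEquiv spaceCap C := by
  obtain ⟨D, hCD, h₀, h₁, h₂⟩ := exists_affEquiv_card_layer_three hC h9
  obtain ⟨d, hd⟩ := card_eq_one.1 h₀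
  obtain ⟨e, he⟩ := affEquiv_planeCap ((hCD.isCap hC).isCap_layer 1) h₁
  obtain ⟨D', hDD', hcard, hD'⟩ := exists_affEquiv_layer D e (e 0 - d)
  suffices D' = spaceCap from this ▸ (hCD.trans hDD').symm
  have hcap₀ : layer spaceCap 0 = {0} := by decide
  have hcap₁ : layer spaceCap 1 = planeCap := by decide
  have hD'₀ : layer D' 0 = {0} := by
    ext x
    rw [hD', hd, mem_singleton, zero_sub, neg_one_smul, neg_sub, add_sub_left_comm,
      add_eq_left, sub_eq_zero, e.injective.eq_iff, mem_singleton]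
  have hD'₁ : layer D' 1 = planeCap := by ext x; simp [hD', he]
  have hD'cap : IsCap D' := (hCD.trans hDD').isCap hC
  refine ext_layer_of_three (hD'₀.trans hcap₀.symm) (hD'₁.trans hcap₁.symm) ?_
  refine eq_layer_spaceCap_two (hD'cap.isCap_layer 2) ((hcard 2).trans h₂) fun x hx hx₂ => ?_
  have hx₀ : -x - -x ∉ layer D' (-1 - 2) :=
    hD'cap.neg_sub_notMem_layer (by decide) (hD'₁ ▸ hx) hx₂
  rw [show (-1 - 2 : ZMod 3) = 0 from rfl, hD'₀] at hx₀
  simp at hx₀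

lemma IsCap.card_le_nine {C : Finset (AG 3)} (hC : IsCap C) : #C ≤ 9 :=
  hC.card_le_of_forall_affEquiv (by decide +kernel) fun _ hD h9 => affEquiv_spaceCap hD h9

end Space

section LinePairs

variable {n : ℕ}

/-- Ordered pairs of distinct points of `A` whose line lies in `A`. -/
def linePairs (A : Finset (AG n)) : Finset (AG n × AG n) :=
  {p ∈ A ×ˢ A | p.1 ≠ p.2 ∧ -p.1 - p.2 ∈ A}

lemma mem_linePairs {A : Finset (AG n)} {x y : AG n} :
    (x, y) ∈ linePairs A ↔ (x ∈ A ∧ y ∈ A) ∧ x ≠ y ∧ -x - y ∈ A := by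
  simp [linePairs]

lemma linePairs_rotate {A : Finset (AG n)} {x y : AG n} (h : (x, y) ∈ linePairs A) :
    (y, -x - y) ∈ linePairs A := by
  rw [mem_linePairs] at h ⊢
  obtain ⟨⟨hx, hy⟩, hxy, hz⟩ := h
  have hxyx : -y - (-x - y) = x := by abel
  refine ⟨⟨hy, hz⟩, fun h => hxy ?_, hxyx.symm ▸ hx⟩
  rw [← neg_add', add_comm, neg_add'] at h
  exact (neg_sub_eq_left_iff.1 h.symm).symm

/-- The first points of the three cyclic rotations of a line in `A` run through the line, and
one of them avoids `B`. -/
lemma IsCap.card_linePairs_le {A B : Finset (AG n)} (hB : IsCap B) {r : ℕ}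
    (hr : ∀ x ∈ A, #{p ∈ linePairs A | p.1 = x} ≤ r) :
    #(linePairs A) ≤ 3 * r * #(A \ B) := by
  let ρ : AG n × AG n → AG n × AG n := fun p => (p.2, -p.1 - p.2)
  have hρA : ∀ p ∈ linePairs A, ρ p ∈ linePairs A := fun _ => linePairs_rotate
  have hρinj : Function.Injective ρ := by
    rintro ⟨x, y⟩ ⟨x', y'⟩ h
    obtain ⟨rfl, h⟩ := Prod.mk.inj h
    exact Prod.ext (neg_inj.1 (sub_left_inj.1 h)) rfl
  let U : (AG n × AG n → AG n × AG n) → Finset (AG n × AG n) :=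
    fun g => {p ∈ linePairs A | (g p).1 ∈ A \ B}
  have hU_id : #(U id) ≤ r * #(A \ B) :=
    card_le_mul_card_image_of_maps_to (f := Prod.fst) (fun p hp => (mem_filter.1 hp).2) r
      fun x hx => (card_le_card (filter_subset_filter _ (filter_subset _ _))).trans
        (hr x (mem_sdiff.1 hx).1)
  have hU : ∀ g, (∀ p ∈ linePairs A, g p ∈ linePairs A) → g.Injective →
      #(U g) ≤ r * #(A \ B) := fun g hg hinj =>
    (card_le_card_of_injOn g (fun p hp => mem_filter.2
      ⟨hg p (mem_filter.1 hp).1, (mem_filter.1 hp).2⟩) hinj.injOn).trans hU_id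
  have hcover : linePairs A ⊆ U id ∪ U ρ ∪ U (ρ ∘ ρ) := by
    rintro ⟨x, y⟩ hp
    obtain ⟨⟨hx, hy⟩, hxy, hz⟩ := mem_linePairs.1 hp
    have h := isCap_iff.1 hB x
    simp only [U, mem_union, mem_filter, hp, true_and, Function.comp_apply, id, ρ, mem_sdiff, hx,
      hy, hz]
    tauto
  calc #(linePairs A) ≤ #(U id) + #(U ρ) + #(U (ρ ∘ ρ)) :=
        (card_le_card hcover).trans ((card_union_le _ _).trans (by gcongr; exact card_union_le _ _))
    _ ≤ r * #(A \ B) + r * #(A \ B) + r * #(A \ B) := by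
      gcongr
      · exact hU ρ hρA hρinj
      · exact hU _ (fun p hp => hρA _ (hρA p hp)) (hρinj.comp hρinj)
    _ = 3 * r * #(A \ B) := by ring

end LinePairs

section FourSpace

/-- The weights separate the level type `{2, 9, 9}` from all others; the inequality also holds on
average over the 80 nonzero `f`. -/
lemma eq_two_nine_nine_of_choose {a b c : ℕ} (ha : a ≤ 9) (hb : b ≤ 9) (hc : c ≤ 9)
    (hsum : a + b + c = 20)
    (hlt : 9 * (a.choose 3 + b.choose 3 + c.choose 3) + 1813 <
      46 * (a.choose 2 + b.choose 2 + c.choose 2)) :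
    a = 2 ∧ b = 9 ∧ c = 9 ∨ a = 9 ∧ b = 2 ∧ c = 9 ∨ a = 9 ∧ b = 9 ∧ c = 2 := by
  obtain rfl : c = 20 - a - b := by omega
  interval_cases a <;> interval_cases b <;> simp_all [Nat.choose]

lemma exists_affEquiv_card_layer_four {C : Finset (AG 4)} (hC : IsCap C) (h20 : #C = 20) :
    ∃ D, AffEquiv C D ∧ #(layer D 0) = 2 ∧ #(layer D 1) = 9 ∧ #(layer D 2) = 9 := by
  obtain ⟨f, hf, hlt⟩ : ∃ f ∈ ({f | f ≠ 0} : Finset (AG 4)),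
      9 * ∑ t, (levelCard C f t).choose 3 + 1813 < 46 * ∑ t, (levelCard C f t).choose 2 := by
    refine exists_lt_of_sum_lt ?_
    have h₂ := sum_choose_two_levelCard C
    have h₃ := hC.sum_choose_three_levelCard
    norm_num [h20, Nat.choose] at h₂ h₃
    rw [sum_add_distrib, ← mul_sum, ← mul_sum, sum_const, card_filter_ne_zero]
    norm_num
    omega
  replace hf : f ≠ 0 := by simpa using hf
  have hle := hC.levelCard_le (fun D hD => hD.card_le_nine) hf
  refine exists_affEquiv_card_layer_of_levelCard hf
    (eq_two_nine_nine_of_choose (hle 0) (hle 1) (hle 2) (h20 ▸ sum_levelCard C f) ?_)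
  simpa only [sum_zmod_three] using hlt

/-- The points lying on no line through a point of `{d, -d}` and a point of `spaceCap`. -/
def unblocked (d : AG 3) : Finset (AG 3) := {y | -y - d ∉ spaceCap ∧ -y + d ∉ spaceCap}

lemma card_linePairs_unblocked : ∀ d : AG 3, d 1 ≠ 0 ∨ d 2 ≠ 0 →
    #(unblocked d) = 12 ∧ #(linePairs (unblocked d)) = 72 ∧
      ∀ x ∈ unblocked d, #{p ∈ linePairs (unblocked d) | p.1 = x} ≤ 6 := by
  decide +kernel

/-- The elliptic quadric without the origin. -/
def fourSpaceCap : Finset (AG 4) := {x | x ≠ 0 ∧ x 0 * x 1 + x 2 ^ 2 + x 3 ^ 2 = 0}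

lemma eq_layer_fourSpaceCap_two {B : Finset (AG 3)} (hB : IsCap B) (h9 : #B = 9) {d : AG 3}
    (hd : d ≠ 0) (hBd : B ⊆ unblocked d) :
    {d, -d} = layer fourSpaceCap 0 ∧ B = layer fourSpaceCap 2 := by
  by_cases h : d 1 ≠ 0 ∨ d 2 ≠ 0
  · obtain ⟨hcard, hpairs, hr⟩ := card_linePairs_unblocked d h
    have hle := hB.card_linePairs_le hr
    rw [hpairs, card_sdiff_of_subset hBd, hcard, h9] at hle
    omega
  · have haxis : ∀ d : AG 3, d ≠ 0 → ¬(d 1 ≠ 0 ∨ d 2 ≠ 0) →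
        {d, -d} = layer fourSpaceCap 0 ∧ unblocked d = layer fourSpaceCap 2 ∧
          #(unblocked d) = 9 := by decide +kernel
    obtain ⟨h₀, h₂, hcard⟩ := haxis d hd h
    exact ⟨h₀, h₂ ▸ eq_of_subset_of_card_le hBd (by rw [hcard, h9])⟩

lemma affEquiv_fourSpaceCap {C : Finset (AG 4)} (hC : IsCap C) (h20 : #C = 20) :
    AffEquiv fourSpaceCap C := by
  obtain ⟨D, hCD, h₀, h₁, h₂⟩ := exists_affEquiv_card_layer_four hC h20
  obtain ⟨a, b, hab, hD₀⟩ := card_eq_two.1 h₀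
  obtain ⟨e, he⟩ := affEquiv_spaceCap ((hCD.isCap hC).isCap_layer 1) h₁
  obtain ⟨D', hDD', hcard, hD'⟩ := exists_affEquiv_layer D e (e 0 + a + b)
  suffices D' = fourSpaceCap from this ▸ (hCD.trans hDD').symm
  have hD'cap : IsCap D' := (hCD.trans hDD').isCap hC
  have hcap₁ : layer fourSpaceCap 1 = spaceCap := by decide +kernel
  have hD'₁ : layer D' 1 = spaceCap := by ext x; simp [hD', he]
  obtain ⟨d, hd⟩ := e.surjective (e 0 + a + b + a)
  have hd_neg : e (-d) = e 0 + a + b + b := by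
    have h := affineEquiv_neg_sub e d 0
    rw [sub_zero, hd] at h
    linear_combination h - add_self_eq_neg (e 0 + a + b)
  have hD'₀ : layer D' 0 = {d, -d} := by
    ext x
    rw [hD', hD₀, zero_sub, neg_one_smul, ← sub_eq_add_neg]
    simp only [mem_insert, mem_singleton, sub_eq_iff_eq_add', ← hd, ← hd_neg, e.injective.eq_iff]
  have hd₀ : d ≠ 0 := by
    intro h
    rw [h, neg_zero] at hd_neg
    exact hab (add_left_cancel ((h ▸ hd).symm.trans hd_neg))
  have hsub : layer D' 2 ⊆ unblocked d := by
    intro y hy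
    have hblock : ∀ x ∈ layer D' 0, -y - x ∉ spaceCap := fun x hx =>
      hD'₁ ▸ hD'cap.neg_sub_notMem_layer (by decide : (2 : ZMod 3) ≠ 0) hy hx
    rw [hD'₀] at hblock
    simpa [unblocked] using hblock
  obtain ⟨hcap₀, hcap₂⟩ :=
    eq_layer_fourSpaceCap_two (hD'cap.isCap_layer 2) ((hcard 2).trans h₂) hd₀ hsub
  exact ext_layer_of_three (hD'₀.trans hcap₀) (hD'₁.trans hcap₁.symm) hcap₂

lemma isCap_fourSpaceCap : IsCap fourSpaceCap := by decide +kernel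

lemma IsCap.card_le_twenty {C : Finset (AG 4)} (hC : IsCap C) : #C ≤ 20 :=
  hC.card_le_of_forall_affEquiv (by decide +kernel) fun _ hD h20 => affEquiv_fourSpaceCap hD h20

lemma maximalCap_iff_affEquiv {C : Finset (AG 4)} : MaximalCap C ↔ AffEquiv fourSpaceCap C := by
  have hcard : #fourSpaceCap = 20 := by decide +kernel
  constructor
  · rintro ⟨hC, hmax⟩
    exact affEquiv_fourSpaceCap hC (hC.card_le_twenty.antisymm (hcard ▸ hmax _ isCap_fourSpaceCap))
  · intro h
    exact ⟨h.isCap isCap_fourSpaceCap, fun D hD => (hcard ▸ h.card_eq) ▸ hD.card_le_twenty⟩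

end FourSpace

/-! ### Quadratic forms -/

section Quadric

variable {n : ℕ} {A B : Matrix (Fin n) (Fin n) (ZMod 3)}

/-- The nonzero isotropic vectors of the form with Gram matrix `A`. -/
def quadric (A : Matrix (Fin n) (Fin n) (ZMod 3)) : Finset (AG n) :=
  {x | x ≠ 0 ∧ x ⬝ᵥ A *ᵥ x = 0}

lemma mem_quadric {x : AG n} : x ∈ quadric A ↔ x ≠ 0 ∧ x ⬝ᵥ A *ᵥ x = 0 := by
  simp [quadric]

lemma quadric_neg (A : Matrix (Fin n) (Fin n) (ZMod 3)) : quadric (-A) = quadric A := by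
  ext x
  simp [mem_quadric, neg_mulVec]

lemma smul_mem_quadric (A : Matrix (Fin n) (Fin n) (ZMod 3)) {t : ZMod 3} (ht : t ≠ 0)
    {x : AG n} : t • x ∈ quadric A ↔ x ∈ quadric A := by
  simp [mem_quadric, mulVec_smul, ht]

lemma mem_quadric_transpose_mul_mul {L : Matrix (Fin n) (Fin n) (ZMod 3)} (hL : IsUnit L)
    (A : Matrix (Fin n) (Fin n) (ZMod 3)) {x : AG n} :
    x ∈ quadric (Lᵀ * A * L) ↔ L *ᵥ x ∈ quadric A := by
  rw [mem_quadric, mem_quadric, ← mulVec_mulVec, ← mulVec_mulVec, dotProduct_mulVec x,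
    vecMul_transpose, (mulVec_injective_of_isUnit hL).ne_iff' (mulVec_zero L)]

lemma isSymm_transpose_mul_mul {R : Type*} [CommRing R] {A : Matrix (Fin n) (Fin n) R}
    (hA : A.IsSymm) (L : Matrix (Fin n) (Fin n) R) : (Lᵀ * A * L).IsSymm := by
  rw [IsSymm, transpose_mul, transpose_mul, transpose_transpose, hA.eq, Matrix.mul_assoc]

lemma det_transpose_mul_mul {L : Matrix (Fin n) (Fin n) (ZMod 3)} (hL : IsUnit L)
    (A : Matrix (Fin n) (Fin n) (ZMod 3)) : (Lᵀ * A * L).det = A.det := by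
  have hsq : ∀ t : ZMod 3, IsUnit t → t * t = 1 := by decide
  rw [det_mul, det_mul, det_transpose, mul_right_comm, hsq _ ((isUnit_iff_isUnit_det L).1 hL),
    one_mul]

lemma transpose_mul_mul_mul {R : Type*} [CommRing R] (A M N : Matrix (Fin n) (Fin n) R) :
    (M * N)ᵀ * A * (M * N) = Nᵀ * (Mᵀ * A * M) * N := by
  simp only [transpose_mul, Matrix.mul_assoc]

lemma transpose_inv_mul_mul_inv_cancel {R : Type*} [CommRing R] {P : Matrix (Fin n) (Fin n) R}
    (hP : IsUnit P) (A : Matrix (Fin n) (Fin n) R) : (P⁻¹)ᵀ * (Pᵀ * A * P) * P⁻¹ = A := by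
  rw [isUnit_iff_isUnit_det] at hP
  rw [Matrix.mul_assoc, mul_nonsing_inv_cancel_right _ _ hP, ← Matrix.mul_assoc, ← transpose_mul,
    mul_nonsing_inv _ hP, transpose_one, Matrix.one_mul]

lemma exists_isUnit_transpose_mul_mul_eq_diagonal {K : Type*} [Field K] [Invertible (2 : K)]
    {A : Matrix (Fin n) (Fin n) K} (hA : A.IsSymm) :
    ∃ P : Matrix (Fin n) (Fin n) K, IsUnit P ∧ ∃ w, Pᵀ * A * P = diagonal w := by
  obtain ⟨v, hv⟩ := LinearMap.BilinForm.exists_orthogonal_basis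
    (B := toBilin' A) ⟨fun x y => (isSymm_toBilin'_iff_isSymm.2 hA).eq x y⟩
  let b := v.reindex (finCongr (Module.finrank_fin_fun K))
  have hb : ∀ i j, i ≠ j → toBilin' A (b i) (b j) = 0 := fun i j hij => by
    simpa [b] using hv ((finCongr (Module.finrank_fin_fun K)).symm.injective.ne hij)
  have h := LinearMap.BilinForm.toMatrix_mul_basis_toMatrix (Pi.basisFun K (Fin n)) b (toBilin' A)
  rw [LinearMap.BilinForm.toMatrix_basisFun, LinearMap.BilinForm.toMatrix'_toBilin'] at h
  have := (Pi.basisFun K (Fin n)).invertibleToMatrix b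
  refine ⟨_, isUnit_of_invertible ((Pi.basisFun K (Fin n)).toMatrix b),
    fun i => toBilin' A (b i) (b i), h.trans ?_⟩
  ext i j
  rw [LinearMap.BilinForm.toMatrix_apply, diagonal_apply]
  split_ifs with hij
  exacts [by rw [hij], hb i j hij]

end Quadric

section Elliptic

/-- The Gram matrix of the form `x₀x₁ + x₂² + x₃²`. -/
def ellipticMatrix : Matrix (Fin 4) (Fin 4) (ZMod 3) :=
  !![0, 2, 0, 0; 2, 0, 0, 0; 0, 0, 1, 0; 0, 0, 0, 1]

lemma isSymm_ellipticMatrix : ellipticMatrix.IsSymm := by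
  unfold IsSymm
  decide

lemma det_ellipticMatrix : ellipticMatrix.det = -1 := by decide

lemma mem_fourSpaceCap {x : AG 4} :
    x ∈ fourSpaceCap ↔ x ≠ 0 ∧ x 0 * x 1 + x 2 ^ 2 + x 3 ^ 2 = 0 := by
  simp [fourSpaceCap]

lemma dotProduct_ellipticMatrix_mulVec (x : AG 4) :
    x ⬝ᵥ ellipticMatrix *ᵥ x = x 0 * x 1 + x 2 ^ 2 + x 3 ^ 2 := by
  have h3 : (3 : ZMod 3) = 0 := rfl
  calc x ⬝ᵥ ellipticMatrix *ᵥ x = x 0 * (2 * x 1) + x 1 * (2 * x 0) + x 2 * x 2 + x 3 * x 3 := by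
        simp [ellipticMatrix, dotProduct, mulVec, Fin.sum_univ_four]
    _ = x 0 * x 1 + x 2 ^ 2 + x 3 ^ 2 := by linear_combination x 0 * x 1 * h3

lemma quadric_ellipticMatrix : quadric ellipticMatrix = fourSpaceCap := by
  ext x
  rw [mem_quadric, mem_fourSpaceCap, dotProduct_ellipticMatrix_mulVec]

/-- The witnesses are the substitution `x₀ ↦ u + v`, `x₁ ↦ u - v`, up to the position of `v`. -/
lemma exists_diagonal_eq_transpose_mul_mul : ∀ w : Fin 4 → ZMod 3, ∏ i, w i = -1 →
    ∃ L, IsUnit L ∧ (diagonal w = Lᵀ * ellipticMatrix * L ∨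
      -diagonal w = Lᵀ * ellipticMatrix * L) := by
  have h : ∀ w : Fin 4 → ZMod 3, ∏ i, w i = -1 → ∃ k : Fin 4,
      letI L := !![1, 1, 0, 0; 1, -1, 0, 0; 0, 0, 1, 0; 0, 0, 0, 1].submatrix id (Equiv.swap 1 k)
      L.det ≠ 0 ∧ (diagonal w = Lᵀ * ellipticMatrix * L ∨
        -diagonal w = Lᵀ * ellipticMatrix * L) := by decide +kernel
  intro w hw
  obtain ⟨k, hk, hL⟩ := h w hw
  exact ⟨_, (isUnit_iff_isUnit_det _).2 hk.isUnit, hL⟩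

lemma exists_eq_transpose_mul_mul {A : Matrix (Fin 4) (Fin 4) (ZMod 3)} (hA : A.IsSymm)
    (hdet : A.det = -1) :
    ∃ L, IsUnit L ∧ (A = Lᵀ * ellipticMatrix * L ∨ -A = Lᵀ * ellipticMatrix * L) := by
  have : Invertible (2 : ZMod 3) := invertibleOfNonzero (by decide)
  obtain ⟨P, hP, w, hw⟩ := exists_isUnit_transpose_mul_mul_eq_diagonal hA
  have hprod : ∏ i, w i = -1 := by
    rw [← det_diagonal, ← hw, det_transpose_mul_mul hP, hdet]
  obtain ⟨L, hL, h⟩ := exists_diagonal_eq_transpose_mul_mul w hprod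
  refine ⟨L * P⁻¹, hL.mul (isUnit_nonsing_inv_iff.2 hP), ?_⟩
  rw [transpose_mul_mul_mul]
  refine h.imp (fun h => ?_) fun h => ?_
  · rw [← h, ← hw, transpose_inv_mul_mul_inv_cancel hP]
  · rw [← h, ← hw, Matrix.mul_neg, Matrix.neg_mul, transpose_inv_mul_mul_inv_cancel hP]

lemma exists_quadric_of_maximalCap {T : Finset (AG 4)} (hT : MaximalCap T) :
    ∃ a A, A.IsSymm ∧ A.det = -1 ∧ ∀ x, x ∈ T ↔ x - a ∈ quadric A := by
  obtain ⟨e, he⟩ := maximalCap_iff_affEquiv.1 hT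
  let M := LinearMap.toMatrix' (e.linear.symm : AG 4 →ₗ[ZMod 3] AG 4)
  have hM : IsUnit M := LinearMap.isUnit_toMatrix'_iff.2
    ((Module.End.isUnit_iff _).2 e.linear.symm.bijective)
  refine ⟨e 0, Mᵀ * ellipticMatrix * M, isSymm_transpose_mul_mul isSymm_ellipticMatrix M,
    (det_transpose_mul_mul hM _).trans det_ellipticMatrix, fun x => ?_⟩
  have hx : M *ᵥ (x - e 0) = e.symm x := by
    rw [LinearMap.toMatrix'_mulVec, LinearEquiv.coe_coe, LinearEquiv.symm_apply_eq]
    exact sub_eq_of_eq_add (by simpa using e.map_vadd 0 (e.symm x))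
  rw [mem_quadric_transpose_mul_mul hM, hx, quadric_ellipticMatrix, ← he, e.apply_symm_apply]

lemma maximalCap_quadric {A : Matrix (Fin 4) (Fin 4) (ZMod 3)} (hA : A.IsSymm)
    (hdet : A.det = -1) : MaximalCap (quadric A) := by
  obtain ⟨L, hL, h⟩ := exists_eq_transpose_mul_mul hA hdet
  have hmem : ∀ x, x ∈ quadric A ↔ L *ᵥ x ∈ fourSpaceCap := fun x => by
    rw [← quadric_ellipticMatrix, ← mem_quadric_transpose_mul_mul hL]
    obtain h | h := h <;> rw [← h]
    rw [quadric_neg]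
  have := hL.invertible
  exact maximalCap_iff_affEquiv.2 (AffEquiv.symm
    ⟨(toLinearEquiv' L ‹_›).toAffineEquiv, fun x => (hmem x).symm⟩)

/-- The symmetric matrix whose upper triangle, read by rows, is `a, …, j`. -/
def symmMatrix (a b c d e f g h i j : ZMod 3) : Matrix (Fin 4) (Fin 4) (ZMod 3) :=
  !![a, b, c, d; b, e, f, g; c, f, h, i; d, g, i, j]

/-- The quadratic form of `symmMatrix a b c d e f g h i j`. -/
def symmForm (a b c d e f g h i j x y z w : ZMod 3) : ZMod 3 :=
  a * x * x + e * y * y + h * z * z + j * w * w +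
    2 * (b * x * y + c * x * z + d * x * w + f * y * z + g * y * w + i * z * w)

lemma dotProduct_symmMatrix_mulVec (a b c d e f g h i j x y z w : ZMod 3) :
    ![x, y, z, w] ⬝ᵥ symmMatrix a b c d e f g h i j *ᵥ ![x, y, z, w] =
      symmForm a b c d e f g h i j x y z w := by
  simp [symmMatrix, symmForm, dotProduct, mulVec, Fin.sum_univ_four]
  ring

lemma isSymm_symmMatrix (a b c d e f g h i j : ZMod 3) :
    (symmMatrix a b c d e f g h i j).IsSymm := by
  simp [symmMatrix, IsSymm.ext_iff, Fin.forall_fin_succ]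

lemma symmMatrix_inj {a b c d e f g h i j a' b' c' d' e' f' g' h' i' j' : ZMod 3} :
    symmMatrix a b c d e f g h i j = symmMatrix a' b' c' d' e' f' g' h' i' j' ↔
      a = a' ∧ b = b' ∧ c = c' ∧ d = d' ∧ e = e' ∧ f = f' ∧ g = g' ∧ h = h' ∧ i = i' ∧ j = j' := by
  refine ⟨fun H => ⟨congrFun₂ H 0 0, congrFun₂ H 0 1, congrFun₂ H 0 2, congrFun₂ H 0 3,
    congrFun₂ H 1 1, congrFun₂ H 1 2, congrFun₂ H 1 3, congrFun₂ H 2 2, congrFun₂ H 2 3,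
    congrFun₂ H 3 3⟩, ?_⟩
  rintro ⟨rfl, rfl, rfl, rfl, rfl, rfl, rfl, rfl, rfl, rfl⟩
  rfl

lemma exists_eq_symmMatrix {A : Matrix (Fin 4) (Fin 4) (ZMod 3)} (hA : A.IsSymm) :
    ∃ a b c d e f g h i j, A = symmMatrix a b c d e f g h i j := by
  refine ⟨A 0 0, A 0 1, A 0 2, A 0 3, A 1 1, A 1 2, A 1 3, A 2 2, A 2 3, A 3 3, ?_⟩
  ext i j
  fin_cases i <;> fin_cases j <;> first | rfl | exact hA.apply _ _

lemma neg_mem_fourSpaceCap {x : AG 4} (hx : x ∈ fourSpaceCap) : -x ∈ fourSpaceCap := by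
  simpa [mem_fourSpaceCap] using hx

lemma vec_mem_fourSpaceCap (z w : ZMod 3) : ![1, -(z * z + w * w), z, w] ∈ fourSpaceCap := by
  refine mem_fourSpaceCap.2 ⟨fun h => one_ne_zero (congrFun h 0), ?_⟩
  change 1 * -(z * z + w * w) + z ^ 2 + w ^ 2 = 0
  ring

lemma vec_zero_mem_fourSpaceCap {t : ZMod 3} (ht : t ≠ 0) : ![0, t, 0, 0] ∈ fourSpaceCap :=
  mem_fourSpaceCap.2 ⟨fun h => ht (congrFun h 1), by simp⟩

lemma exists_eq_smul_ellipticMatrix {A : Matrix (Fin 4) (Fin 4) (ZMod 3)} (hA : A.IsSymm)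
    (hvan : ∀ x ∈ fourSpaceCap, x ⬝ᵥ A *ᵥ x = 0) : ∃ c : ZMod 3, A = c • ellipticMatrix := by
  obtain ⟨a, b, c, d, e, f, g, h, i, j, rfl⟩ := exists_eq_symmMatrix hA
  have h₀ : symmForm a b c d e f g h i j 0 1 0 0 = 0 :=
    (dotProduct_symmMatrix_mulVec ..).symm.trans (hvan _ (vec_zero_mem_fourSpaceCap one_ne_zero))
  have h₁ (z w : ZMod 3) : symmForm a b c d e f g h i j 1 (-(z * z + w * w)) z w = 0 :=
    (dotProduct_symmMatrix_mulVec ..).symm.trans (hvan _ (vec_mem_fourSpaceCap z w))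
  have ha := h₁ 0 0
  have hz := h₁ 1 0
  have hz' := h₁ (-1) 0
  have hw := h₁ 0 1
  have hw' := h₁ 0 (-1)
  have hzw := h₁ 1 1
  have hzw' := h₁ 1 (-1)
  have hzw'' := h₁ (-1) 1
  simp only [symmForm] at h₀ ha hz hz' hw hw' hzw hzw' hzw''
  obtain ⟨rfl, rfl, rfl, rfl, rfl, rfl, rfl, rfl, rfl⟩ : a = 0 ∧ e = 0 ∧ c = 0 ∧ f = 0 ∧
      d = 0 ∧ g = 0 ∧ i = 0 ∧ h = 2 * b ∧ j = 2 * b := by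
    clear h₁ hvan hA
    refine ⟨?_, ?_, ?_, ?_, ?_, ?_, ?_, ?_, ?_⟩ <;> grind
  have hb : ∀ b, symmMatrix 0 b 0 0 0 0 0 (2 * b) 0 (2 * b) = (2 * b) • ellipticMatrix := by decide
  exact ⟨2 * b, hb b⟩

lemma exists_eq_smul_of_quadric_subset {A B : Matrix (Fin 4) (Fin 4) (ZMod 3)} (hA : A.IsSymm)
    (hdet : A.det = -1) (hB : B.IsSymm) (h : quadric A ⊆ quadric B) : ∃ c : ZMod 3, B = c • A := by
  obtain ⟨L, hL, hAL⟩ := exists_eq_transpose_mul_mul hA hdet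
  have hL' : IsUnit L⁻¹ := isUnit_nonsing_inv_iff.2 hL
  have hA' : quadric A = quadric (Lᵀ * ellipticMatrix * L) := by
    obtain h | h := hAL <;> rw [← h]
    rw [quadric_neg]
  have hvan : ∀ x ∈ fourSpaceCap, x ⬝ᵥ ((L⁻¹)ᵀ * B * L⁻¹) *ᵥ x = 0 := fun x hx => by
    refine (mem_quadric.1 ((mem_quadric_transpose_mul_mul hL' B).2 (h ?_))).2
    rwa [hA', ← mem_quadric_transpose_mul_mul hL', transpose_inv_mul_mul_inv_cancel hL,
      quadric_ellipticMatrix]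
  obtain ⟨c, hc⟩ := exists_eq_smul_ellipticMatrix (isSymm_transpose_mul_mul hB _) hvan
  have hB' := transpose_inv_mul_mul_inv_cancel hL' B
  rw [hc, nonsing_inv_nonsing_inv _ ((isUnit_iff_isUnit_det L).1 hL), Matrix.mul_smul,
    Matrix.smul_mul] at hB'
  obtain h | h := hAL
  · exact ⟨c, by rw [← hB', h]⟩
  · exact ⟨-c, by rw [← hB', ← h, smul_neg, neg_smul]⟩

end Elliptic

section Isometry

/-- The Siegel transformation of the elliptic form fixing `e₁`. -/
def siegel (u v : ZMod 3) : Matrix (Fin 4) (Fin 4) (ZMod 3) :=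
  !![1, 0, 0, 0; -(u * u + v * v), 1, u, v; u, 0, 1, 0; v, 0, 0, 1]

/-- The matrices of the isometries of the elliptic form. -/
def IsEllipticIsometry (N : Matrix (Fin 4) (Fin 4) (ZMod 3)) : Prop :=
  Nᵀ * ellipticMatrix * N = ellipticMatrix

lemma IsEllipticIsometry.mul {M N : Matrix (Fin 4) (Fin 4) (ZMod 3)} (hM : IsEllipticIsometry M)
    (hN : IsEllipticIsometry N) : IsEllipticIsometry (M * N) := by
  rw [IsEllipticIsometry, transpose_mul_mul_mul, hM, hN]

lemma isEllipticIsometry_siegel : ∀ u v, IsEllipticIsometry (siegel u v) := by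
  unfold IsEllipticIsometry
  decide

lemma IsEllipticIsometry.isUnit {N : Matrix (Fin 4) (Fin 4) (ZMod 3)}
    (hN : IsEllipticIsometry N) : IsUnit N := by
  have h := congrArg det hN
  rw [det_mul, det_ellipticMatrix, isUnit_iff_isUnit_det] at *
  exact isUnit_of_mul_isUnit_right (h ▸ isUnit_one.neg)

lemma IsEllipticIsometry.mulVec_mem_iff {N : Matrix (Fin 4) (Fin 4) (ZMod 3)}
    (hN : IsEllipticIsometry N) {x : AG 4} : N *ᵥ x ∈ fourSpaceCap ↔ x ∈ fourSpaceCap := by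
  rw [← quadric_ellipticMatrix, ← mem_quadric_transpose_mul_mul hN.isUnit, hN]

lemma exists_siegel_mulVec_one_ne_zero :
    ∀ a : AG 4, a ≠ 0 → ∃ u v, (siegel u v *ᵥ a) 1 ≠ 0 := by
  decide +kernel

lemma exists_siegel_mulVec_eq :
    ∀ a : AG 4, a 0 ≠ 0 → ∃ u v s, siegel u v *ᵥ a = a 0 • ![1, s, 0, 0] := by
  decide +kernel

lemma exists_isEllipticIsometry_mulVec_eq {a : AG 4} (ha : a ≠ 0) :
    ∃ N, IsEllipticIsometry N ∧ ∃ s, N *ᵥ a = ![1, s, 0, 0] := by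
  let σ : Matrix (Fin 4) (Fin 4) (ZMod 3) := !![0, 1, 0, 0; 1, 0, 0, 0; 0, 0, 1, 0; 0, 0, 0, 1]
  have hσ : IsEllipticIsometry σ := by unfold IsEllipticIsometry; decide
  obtain ⟨u, v, h₁⟩ := exists_siegel_mulVec_one_ne_zero a ha
  let b := σ *ᵥ siegel u v *ᵥ a
  have hσ₀ : ∀ x, (σ *ᵥ x) 0 = x 1 := fun x => by simp [σ, mulVec, dotProduct, Fin.sum_univ_four]
  have hb : b 0 ≠ 0 := (hσ₀ _).trans_ne h₁
  obtain ⟨u', v', s, hs⟩ := exists_siegel_mulVec_eq b hb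
  have hsq : ∀ t : ZMod 3, t ≠ 0 → t * t = 1 := by decide
  refine ⟨b 0 • (siegel u' v' * (σ * siegel u v)), ?_, s, ?_⟩
  · have h := (isEllipticIsometry_siegel u' v').mul (hσ.mul (isEllipticIsometry_siegel u v))
    rw [IsEllipticIsometry, transpose_smul, Matrix.smul_mul, Matrix.smul_mul, Matrix.mul_smul,
      smul_smul, hsq _ hb, one_smul, h]
  · rw [smul_mulVec, ← mulVec_mulVec, ← mulVec_mulVec, hs, smul_smul, hsq _ hb, one_smul]

end Isometry

section Translate

set_option maxRecDepth 100000 in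
set_option synthInstance.maxSize 1000 in
/-- Points of the translated cap with more and more nonzero coordinates are used in turn, so that
the exhaustive check over the coefficients prunes early. -/
lemma det_symmMatrix_ne_of_symmForm_ne_zero : ∀ s a b e : ZMod 3,
    (s ≠ 0 → symmForm a b 0 0 e 0 0 0 0 0 0 (-s) 0 0 ≠ 0) →
    symmForm a b 0 0 e 0 0 0 0 0 1 (-s) 0 0 ≠ 0 →
    symmForm a b 0 0 e 0 0 0 0 0 1 (s - 1) 0 0 ≠ 0 →
    symmForm a b 0 0 e 0 0 0 0 0 1 (s + 1) 0 0 ≠ 0 →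
    ∀ c f h : ZMod 3, (∀ z, z ≠ 0 → symmForm a b c 0 e f 0 h 0 0 0 (-(z * z) - s) z 0 ≠ 0 ∧
      symmForm a b c 0 e f 0 h 0 0 1 (z * z - s) z 0 ≠ 0) →
    ∀ d g j : ZMod 3, (∀ w, w ≠ 0 → symmForm a b 0 d e 0 g 0 0 j 0 (-(w * w) - s) 0 w ≠ 0 ∧
      symmForm a b 0 d e 0 g 0 0 j 1 (w * w - s) 0 w ≠ 0) →
    ∀ i : ZMod 3, (∀ z w, z ≠ 0 → w ≠ 0 →
      symmForm a b c d e f g h i j 0 (-(z * z + w * w) - s) z w ≠ 0 ∧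
      symmForm a b c d e f g h i j 1 (z * z + w * w - s) z w ≠ 0) →
    (symmMatrix a b c d e f g h i j).det ≠ -1 := by
  decide +kernel

lemma exists_sub_mem_quadric {A : Matrix (Fin 4) (Fin 4) (ZMod 3)} (hA : A.IsSymm)
    (hdet : A.det = -1) (s : ZMod 3) : ∃ x ∈ fourSpaceCap, x - ![1, s, 0, 0] ∈ quadric A := by
  by_contra! hdisj
  obtain ⟨a, b, c, d, e, f, g, h, i, j, rfl⟩ := exists_eq_symmMatrix hA
  have hform (x y z w : ZMod 3) (hx : ![x, y, z, w] ∈ fourSpaceCap)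
      (hne : ![x - 1, y - s, z, w] ≠ 0) : symmForm a b c d e f g h i j (x - 1) (y - s) z w ≠ 0 := by
    have hsub : ![x, y, z, w] - ![1, s, 0, 0] = ![x - 1, y - s, z, w] := by simp
    intro h₀
    refine hdisj _ hx ?_
    rw [hsub]
    exact mem_quadric.2 ⟨hne, (dotProduct_symmMatrix_mulVec ..).trans h₀⟩
  have hpos (z w : ZMod 3) (hne : ![0, -(z * z + w * w) - s, z, w] ≠ 0) :
      symmForm a b c d e f g h i j 0 (-(z * z + w * w) - s) z w ≠ 0 := by
    have := hform _ _ _ _ (vec_mem_fourSpaceCap z w)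
    rw [sub_self] at this
    exact this hne
  have hneg (z w : ZMod 3) : symmForm a b c d e f g h i j 1 (z * z + w * w - s) z w ≠ 0 := by
    have hx : ![-1, z * z + w * w, z, w] ∈ fourSpaceCap := by
      simpa using neg_mem_fourSpaceCap (vec_mem_fourSpaceCap (-z) (-w))
    have := hform _ _ _ _ hx
    rw [show (-1 - 1 : ZMod 3) = 1 from rfl] at this
    exact this fun h => one_ne_zero (congrFun h 0)
  have haxis (t : ZMod 3) (ht : t ≠ 0) : symmForm a b c d e f g h i j 1 (s - t) 0 0 ≠ 0 := by
    have := hform _ _ _ _ (vec_zero_mem_fourSpaceCap ht)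
      fun h => neg_ne_zero.2 one_ne_zero ((zero_sub _).symm.trans (congrFun h 0))
    convert this using 1
    simp only [symmForm]
    ring
  refine det_symmMatrix_ne_of_symmForm_ne_zero s a b e (fun hs => ?_) ?_ ?_ ?_ c f h
    (fun z hz => ⟨?_, ?_⟩) d g j (fun w hw => ⟨?_, ?_⟩) i (fun z w hz _ => ⟨?_, hneg z w⟩) hdet
  · simpa [symmForm] using hpos 0 0 (fun h => hs (by simpa using congrFun h 1))
  · simpa [symmForm] using hneg 0 0
  · simpa [symmForm] using haxis 1 one_ne_zero
  · simpa [symmForm] using haxis (-1) (neg_ne_zero.2 one_ne_zero)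
  · simpa [symmForm] using hpos z 0 (fun h => hz (congrFun h 2))
  · simpa [symmForm] using hneg z 0
  · simpa [symmForm] using hpos 0 w (fun h => hw (congrFun h 3))
  · simpa [symmForm] using hneg 0 w
  · exact hpos z w (fun h => hz (congrFun h 2))

lemma eq_zero_of_forall_sub_notMem_quadric {A : Matrix (Fin 4) (Fin 4) (ZMod 3)} (hA : A.IsSymm)
    (hdet : A.det = -1) {a : AG 4} (h : ∀ x ∈ fourSpaceCap, x - a ∉ quadric A) : a = 0 := by
  by_contra ha
  obtain ⟨N, hN, s, hNa⟩ := exists_isEllipticIsometry_mulVec_eq ha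
  have hN' : IsUnit N⁻¹ := isUnit_nonsing_inv_iff.2 hN.isUnit
  obtain ⟨y, hy, hyA⟩ := exists_sub_mem_quadric (isSymm_transpose_mul_mul hA N⁻¹)
    ((det_transpose_mul_mul hN' A).trans hdet) s
  rw [mem_quadric_transpose_mul_mul hN', ← hNa, mulVec_sub, mulVec_mulVec a N⁻¹ N,
    nonsing_inv_mul _ ((isUnit_iff_isUnit_det N).1 hN.isUnit), one_mulVec] at hyA
  refine h _ (hN.mulVec_mem_iff.1 ?_) hyA
  rwa [mulVec_mulVec, mul_nonsing_inv _ ((isUnit_iff_isUnit_det N).1 hN.isUnit), one_mulVec]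

end Translate

/-! ### Caps disjoint from the standard one -/

section Count

/-- The coefficients `(c, f, h)` completing `b` and `e` to a form in the variables `x₀, x₁, x₂` with
leading coefficient 1 and without zeros on the points `(1, -z², z)`. -/
def planeForms (b e : ZMod 3) : Finset (ZMod 3 × ZMod 3 × ZMod 3) :=
  {(c, f, h) | ∀ z, symmForm 1 b c 0 e f 0 h 0 0 1 (-(z * z)) z 0 ≠ 0}

/-- The coefficients of a form with leading coefficient 1, grouped as
`⟨(b, e), (c, f, h), (d, g, j), i⟩`. Fixing the leading coefficient selects one of the two forms
`A` and `-A` with the same zeros. -/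
abbrev FormCoeffs :=
  Σ _ : ZMod 3 × ZMod 3, (ZMod 3 × ZMod 3 × ZMod 3) × (ZMod 3 × ZMod 3 × ZMod 3) × ZMod 3

/-- The forms of determinant -1 whose zeros avoid `fourSpaceCap`. The restrictions of such a form
to `x₃ = 0` and to `x₂ = 0` both come from `planeForms`, which keeps the enumeration small. -/
def avoidingForms : Finset FormCoeffs :=
  Finset.sigma {p | p.2 ≠ 0} fun (b, e) =>
    (planeForms b e ×ˢ planeForms b e ×ˢ univ).filter fun ((c, f, h), (d, g, j), i) =>
      (∀ z w, z ≠ 0 → w ≠ 0 → symmForm 1 b c d e f g h i j 1 (-(z * z + w * w)) z w ≠ 0) ∧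
        (symmMatrix 1 b c d e f g h i j).det = -1

set_option maxRecDepth 100000 in
set_option synthInstance.maxSize 1000 in
lemma card_avoidingForms : #avoidingForms = 198 := by
  decide +kernel

lemma eq_smul_of_mem_fourSpaceCap : ∀ x ∈ fourSpaceCap, ∃ t : ZMod 3, t ≠ 0 ∧
    (x = t • ![0, 1, 0, 0] ∨ ∃ z w, x = t • ![1, -(z * z + w * w), z, w]) := by
  decide +kernel

lemma disjoint_quadric_symmMatrix_iff {a b c d e f g h i j : ZMod 3} :
    Disjoint fourSpaceCap (quadric (symmMatrix a b c d e f g h i j)) ↔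
      symmForm a b c d e f g h i j 0 1 0 0 ≠ 0 ∧
        ∀ z w, symmForm a b c d e f g h i j 1 (-(z * z + w * w)) z w ≠ 0 := by
  simp only [← dotProduct_symmMatrix_mulVec]
  constructor
  · intro hdisj
    have hform (x : AG 4) (hx : x ∈ fourSpaceCap) :
        x ⬝ᵥ symmMatrix a b c d e f g h i j *ᵥ x ≠ 0 := fun h₀ =>
      disjoint_left.1 hdisj hx (mem_quadric.2 ⟨(mem_fourSpaceCap.1 hx).1, h₀⟩)
    exact ⟨hform _ (vec_zero_mem_fourSpaceCap one_ne_zero),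
      fun z w => hform _ (vec_mem_fourSpaceCap z w)⟩
  · rintro ⟨h₀, h₁⟩
    refine disjoint_left.2 fun x hx hxA => ?_
    obtain ⟨t, ht, rfl | ⟨z, w, rfl⟩⟩ := eq_smul_of_mem_fourSpaceCap x hx <;>
      rw [smul_mem_quadric _ ht, mem_quadric] at hxA
    exacts [h₀ hxA.2, h₁ z w hxA.2]

lemma mem_avoidingForms {b c d e f g h i j : ZMod 3} :
    ⟨(b, e), (c, f, h), (d, g, j), i⟩ ∈ avoidingForms ↔
      Disjoint fourSpaceCap (quadric (symmMatrix 1 b c d e f g h i j)) ∧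
        (symmMatrix 1 b c d e f g h i j).det = -1 := by
  simp only [avoidingForms, planeForms, mem_sigma, mem_filter, mem_product, mem_univ, true_and,
    and_true, disjoint_quadric_symmMatrix_iff]
  have he : symmForm 1 b c d e f g h i j 0 1 0 0 = e := by simp [symmForm]
  have hz (z : ZMod 3) : symmForm 1 b c d e f g h i j 1 (-(z * z + 0 * 0)) z 0 =
      symmForm 1 b c 0 e f 0 h 0 0 1 (-(z * z)) z 0 := by simp [symmForm]
  have hw (w : ZMod 3) : symmForm 1 b c d e f g h i j 1 (-(0 * 0 + w * w)) 0 w =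
      symmForm 1 b d 0 e g 0 j 0 0 1 (-(w * w)) w 0 := by simp [symmForm]
  rw [he]
  constructor
  · rintro ⟨he, ⟨hcfh, hdgj⟩, hzw, hdet⟩
    refine ⟨⟨he, fun z w => ?_⟩, hdet⟩
    obtain rfl | hw₀ := eq_or_ne w 0
    · exact (hz z).trans_ne (hcfh z)
    obtain rfl | hz₀ := eq_or_ne z 0
    · exact (hw w).trans_ne (hdgj w)
    exact hzw z w hz₀ hw₀
  · rintro ⟨⟨he, h⟩, hdet⟩
    exact ⟨he, ⟨fun z => (hz z).symm.trans_ne (h z 0), fun w => (hw w).symm.trans_ne (h 0 w)⟩,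
      fun z w _ _ => h z w, hdet⟩

lemma eq_of_quadric_eq {A B : Matrix (Fin 4) (Fin 4) (ZMod 3)} (hA : A.IsSymm) (hdet : A.det = -1)
    (hB : B.IsSymm) (hA₀ : A 0 0 = 1) (hB₀ : B 0 0 = 1) (h : quadric A = quadric B) : A = B := by
  obtain ⟨r, rfl⟩ := exists_eq_smul_of_quadric_subset hA hdet hB h.subset
  rw [Matrix.smul_apply, hA₀, smul_eq_mul, mul_one] at hB₀
  rw [hB₀, one_smul]

lemma exists_quadric_of_disjoint_fourSpaceCap {T : Finset (AG 4)} (hT : MaximalCap T)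
    (hdisj : Disjoint fourSpaceCap T) :
    ∃ A, A.IsSymm ∧ A.det = -1 ∧ A 0 0 = 1 ∧ T = quadric A := by
  obtain ⟨a, A, hA, hdet, hTA⟩ := exists_quadric_of_maximalCap hT
  obtain rfl : a = 0 := eq_zero_of_forall_sub_notMem_quadric hA hdet fun x hx =>
    (hTA x).not.1 (disjoint_left.1 hdisj hx)
  obtain rfl : T = quadric A := by
    ext x
    rw [hTA, sub_zero]
  have hA₀ : A 0 0 ≠ 0 := fun h₀ => by
    have hx : ![1, -(0 * 0 + 0 * 0), 0, 0] ∈ fourSpaceCap :=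
      vec_mem_fourSpaceCap 0 0
    refine disjoint_left.1 hdisj hx (mem_quadric.2 ⟨(mem_fourSpaceCap.1 hx).1, ?_⟩)
    simpa [dotProduct, mulVec, Fin.sum_univ_four] using h₀
  have hcases : ∀ t : ZMod 3, t ≠ 0 → t = 1 ∨ t = -1 := by decide
  obtain h₁ | h₁ := hcases _ hA₀
  · exact ⟨A, hA, hdet, h₁, rfl⟩
  · refine ⟨-A, hA.neg, ?_, ?_, (quadric_neg A).symm⟩
    · rw [det_neg, Fintype.card_fin, hdet]
      rfl
    · rw [neg_apply, h₁, neg_neg]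

lemma card_maximalCap_disjoint_fourSpaceCap :
    Nat.card {T // MaximalCap T ∧ Disjoint fourSpaceCap T} = 198 := by
  let q : FormCoeffs → Finset (AG 4) := fun ⟨(b, e), (c, f, h), (d, g, j), i⟩ =>
    quadric (symmMatrix 1 b c d e f g h i j)
  have hmem : ∀ T, T ∈ avoidingForms.image q ↔ MaximalCap T ∧ Disjoint fourSpaceCap T := by
    intro T
    rw [mem_image]
    constructor
    · rintro ⟨⟨⟨b, e⟩, ⟨c, f, h⟩, ⟨d, g, j⟩, i⟩, hp, rfl⟩
      rw [mem_avoidingForms] at hp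
      exact ⟨maximalCap_quadric (isSymm_symmMatrix ..) hp.2, hp.1⟩
    · rintro ⟨hT, hdisj⟩
      obtain ⟨A, hA, hdet, hA₀, rfl⟩ := exists_quadric_of_disjoint_fourSpaceCap hT hdisj
      obtain ⟨a, b, c, d, e, f, g, h, i, j, rfl⟩ := exists_eq_symmMatrix hA
      obtain rfl : a = 1 := hA₀
      exact ⟨⟨(b, e), (c, f, h), (d, g, j), i⟩, mem_avoidingForms.2 ⟨hdisj, hdet⟩, rfl⟩
  have hinj : Set.InjOn q avoidingForms := by
    rintro ⟨⟨b, e⟩, ⟨c, f, h⟩, ⟨d, g, j⟩, i⟩ hp ⟨⟨b', e'⟩, ⟨c', f', h'⟩, ⟨d', g', j'⟩, i'⟩ _ hq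
    have hsymm := eq_of_quadric_eq (isSymm_symmMatrix ..) (mem_avoidingForms.1 hp).2
      (isSymm_symmMatrix ..) rfl rfl hq
    obtain ⟨-, rfl, rfl, rfl, rfl, rfl, rfl, rfl, rfl, rfl⟩ := symmMatrix_inj.1 hsymm
    rfl
  rw [Nat.subtype_card _ hmem, card_image_of_injOn hinj, card_avoidingForms]

lemma AffEquiv.card_maximalCap_disjoint_eq {n : ℕ} {C D : Finset (AG n)} (h : AffEquiv C D) :
    Nat.card {T // MaximalCap T ∧ Disjoint C T} = Nat.card {T // MaximalCap T ∧ Disjoint D T} := by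
  obtain ⟨e, he⟩ := h
  refine Nat.card_congr (e.toEquiv.finsetCongr.subtypeEquiv fun T => and_congr ?_ ?_)
  · exact AffEquiv.maximalCap_iff ⟨e, fun x => by simp⟩
  · rw [← disjoint_map e.toEquiv.toEmbedding, Equiv.finsetCongr_apply]
    have hCD : C.map e.toEquiv.toEmbedding = D := by
      ext x
      obtain ⟨y, rfl⟩ := e.surjective x
      simp [he]
    rw [hCD]

end Count

/-- Every maximal cap in `AG(4,3)` is disjoint from exactly 198 maximal caps. -/
theorem card_maximal_caps_AG43_disjoint_from
    (S : Finset (Fin 4 → ZMod 3)) (hS : MaximalCap S) :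
    Nat.card {T : Finset (Fin 4 → ZMod 3) // MaximalCap T ∧ Disjoint S T} = 198 :=
  (maximalCap_iff_affEquiv.1 hS).card_maximalCap_disjoint_eq.symm.trans
    card_maximalCap_disjoint_fourSpaceCap
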